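/- Let A and B be unital complex Banach algebras with B semisimple, I ⊆ A and J ⊆ B proper closed two-sided ideals, and T : A → B linear, essentially spectrally bounded with constant M (r(Tx + J) ≤ M·r(x + I) for all x) and surjective modulo J. Then for every x ∈ I, the coset Tx + J lies in the Jacobson radical of B/J; in particular, if B/J is semisimple then T(I) ⊆ J. -/

import Mathlib

open scoped ENNReal NNReal

/-- The quotient of a complex algebra by a two-sided ideal is a complex algebra. -/
noncomputable instance TwoSidedIdeal.quotientAlgebra {A : Type*} [Ring A] [Algebra ℂ A]
    (I : TwoSidedIdeal A) : Algebra ℂ I.ringCon.Quotient :=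
  (I.ringCon.mk'.comp (algebraMap ℂ A)).toAlgebra' (by
    intro c x
    induction x using Quotient.ind
    rename_i a
    show I.ringCon.mk' (algebraMap ℂ A c) * I.ringCon.mk' a =
      I.ringCon.mk' a * I.ringCon.mk' (algebraMap ℂ A c)
    rw [← map_mul, ← map_mul, Algebra.commutes])

open Filter Topology

section SB
variable {C : Type*} [NormedRing C] [NormedAlgebra ℂ C] [CompleteSpace C] [NormOneClass C]

theorem sb_exists_pow (a : C) (c : ℝ) (hc : 0 < c) (h : ∀ w ∈ spectrum ℂ a, ‖w‖ < c) :
    ∃ n : ℕ, 0 < n ∧ ‖a ^ n‖ < c ^ n := by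
  have : Nontrivial C := NormOneClass.nontrivial
  have h1 : spectralRadius ℂ a < (c.toNNReal : ENNReal) := by
    apply spectrum.spectralRadius_lt_of_forall_lt
    intro z hz
    have := h z hz
    rw [← NNReal.coe_lt_coe, Real.coe_toNNReal _ hc.le]
    exact this
  have h2 := (spectrum.pow_nnnorm_pow_one_div_tendsto_nhds_spectralRadius a).eventually_lt_const h1
  obtain ⟨n, hn, hn0⟩ := (h2.and (eventually_gt_atTop 0)).exists
  refine ⟨n, hn0, ?_⟩
  have hn' : (0:ℝ) < n := by exact_mod_cast hn0
  have h3 : ((‖a ^ n‖₊ : ENNReal) ^ (1 / n : ℝ)) ^ (n : ℝ) < (c.toNNReal : ENNReal) ^ (n:ℝ) :=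
    ENNReal.rpow_lt_rpow hn hn'
  rw [← ENNReal.rpow_mul, one_div, inv_mul_cancel₀ hn'.ne', ENNReal.rpow_one,
    ENNReal.rpow_natCast, ← ENNReal.coe_pow, ENNReal.coe_lt_coe, ← NNReal.coe_lt_coe] at h3
  simpa [Real.coe_toNNReal _ hc.le] using h3

theorem sb_of_pow (a : C) (c : ℝ) (hc : 0 ≤ c) (n : ℕ) (hn : 0 < n) (h : ‖a ^ n‖ ≤ c ^ n) :
    ∀ w ∈ spectrum ℂ a, ‖w‖ ≤ c := by
  intro w hw
  have h1 := spectrum.norm_le_norm_of_mem (spectrum.pow_mem_pow a n hw)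
  rw [norm_pow] at h1
  exact le_of_pow_le_pow_left₀ hn.ne' hc (h1.trans h)

/-- Maximum principle for the spectral radius. -/
theorem sb_max (F : ℂ → C) (U : Set ℂ) (hU : Bornology.IsBounded U) (hF : DiffContOnCl ℂ F U)
    (c : ℝ) (hc : 0 ≤ c) (h : ∀ z ∈ frontier U, ∀ w ∈ spectrum ℂ (F z), ‖w‖ ≤ c)
    (z₀ : ℂ) (hz₀ : z₀ ∈ U) : ∀ w ∈ spectrum ℂ (F z₀), ‖w‖ ≤ c := by
  intro w hw
  refine le_of_forall_gt_imp_ge_of_dense fun c' hc' => ?_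
  have hc'0 : 0 < c' := hc.trans_lt hc'
  have hK : IsCompact (frontier U) :=
    Metric.isCompact_of_isClosed_isBounded isClosed_frontier
      (hU.closure.subset frontier_subset_closure)
  have key : ∃ N : ℕ, 0 < N ∧ ∀ z ∈ frontier U, ‖F z ^ N‖ ≤ c' ^ N := by
    refine hK.induction_on (p := fun S => ∃ N : ℕ, 0 < N ∧ ∀ z ∈ S, ‖F z ^ N‖ ≤ c' ^ N) ?_ ?_ ?_ ?_
    · exact ⟨1, one_pos, by simp⟩
    · rintro s t hst ⟨N, hN, h⟩
      exact ⟨N, hN, fun z hz => h z (hst hz)⟩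
    · rintro s t ⟨N, hN, h⟩ ⟨N', hN', h'⟩
      refine ⟨N * N', Nat.mul_pos hN hN', ?_⟩
      rintro z (hz | hz)
      · rw [pow_mul, pow_mul]
        exact (norm_pow_le _ _).trans (pow_le_pow_left₀ (norm_nonneg _) (h z hz) _)
      · rw [mul_comm, pow_mul, pow_mul]
        exact (norm_pow_le _ _).trans (pow_le_pow_left₀ (norm_nonneg _) (h' z hz) _)
    · intro z hz
      obtain ⟨n, hn, hlt⟩ := sb_exists_pow (F z) c' hc'0 fun w hw => (h z hz w hw).trans_lt hc'
      have hcont : ContinuousWithinAt (fun z => ‖F z ^ n‖) (frontier U) z :=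
        (((hF.continuousOn.mono frontier_subset_closure) z hz).pow n).norm
      refine ⟨_, hcont.eventually_lt_const hlt, n, hn, fun z hz => le_of_lt hz⟩
  obtain ⟨N, hN, hb⟩ := key
  refine sb_of_pow (F z₀) c' hc'0.le N hN ?_ w hw
  refine Complex.norm_le_of_forall_mem_frontier_norm_le (f := fun z => F z ^ N) hU ?_ hb
    (subset_closure hz₀)
  exact ⟨hF.differentiableOn.pow N, hF.continuousOn.pow N⟩

theorem sb_smul_pow (a : C) (k : ℂ) (hk : k ≠ 0) (N : ℕ) (hN : 0 < N) (w : ℂ) :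
    w ∈ spectrum ℂ (k • a ^ N) ↔ ∃ v ∈ spectrum ℂ a, w = k * v ^ N := by
  have h1 := spectrum.unit_smul_eq_smul (a ^ N) (Units.mk0 k hk)
  have h2 : (Units.mk0 k hk) • a ^ N = k • a ^ N := rfl
  rw [h2] at h1
  rw [h1, spectrum.map_pow_of_pos a hN, Set.mem_smul_set]
  constructor
  · rintro ⟨_, ⟨v, hv, rfl⟩, rfl⟩
    exact ⟨v, hv, rfl⟩
  · rintro ⟨v, hv, rfl⟩
    exact ⟨_, ⟨v, hv, rfl⟩, rfl⟩

/-- Liouville theorem for the spectral radius. -/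
theorem sb_liouville (b y : C) (K : ℝ)
    (hK : ∀ z : ℂ, ∀ w ∈ spectrum ℂ (z • b + y), ‖w‖ ≤ K) (c : ℝ) (hc : 0 < c)
    (hy : ∀ w ∈ spectrum ℂ y, ‖w‖ < c) : ∀ w ∈ spectrum ℂ (b + y), ‖w‖ ≤ c := by
  intro w hw
  obtain ⟨n, hn, hlt⟩ := sb_exists_pow y c hc hy
  have hpcont : Continuous fun z : ℂ => z • b + y := by fun_prop
  have hpd : Differentiable ℂ fun z : ℂ => z • b + y := by fun_prop
  have hev : ∀ᶠ z : ℂ in 𝓝 0, ‖(z • b + y) ^ n‖ < c ^ n := by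
    have : ContinuousAt (fun z : ℂ => ‖(z • b + y) ^ n‖) 0 := by fun_prop
    exact this.eventually_lt_const (by simpa using hlt)
  obtain ⟨ε, hε, hball⟩ := Metric.eventually_nhds_iff.1 hev
  obtain ⟨δ, hδ0, hδ⟩ := exists_between (lt_min hε one_pos)
  have hδε := hδ.trans_le (min_le_left _ _)
  have hδ1 := hδ.trans_le (min_le_right _ _)
  have main : ∀ N : ℕ, 0 < N → ‖w‖ ^ N ≤ δ⁻¹ * c ^ N := by
    intro N hN
    set D := δ⁻¹ * c ^ N with hD
    have hDpos : 0 < D := by positivity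
    set R := max 2 (|K| ^ N / D) with hR
    have hR2 : 2 ≤ R := le_max_left _ _
    have hRK : |K| ^ N / D ≤ R := le_max_right _ _
    set U : Set ℂ := Metric.ball 0 R \ Metric.closedBall 0 δ with hUdef
    have hUcl : closure U ⊆ {z : ℂ | δ ≤ ‖z‖ ∧ ‖z‖ ≤ R} := by
      refine closure_minimal ?_ ?_
      · rintro z ⟨h1, h2⟩
        simp only [Metric.mem_ball, Metric.mem_closedBall, dist_zero_right, not_le] at h1 h2
        exact ⟨h2.le, h1.le⟩
      · exact (isClosed_le continuous_const continuous_norm).inter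
          (isClosed_le continuous_norm continuous_const)
    have hUo : IsOpen U := Metric.isOpen_ball.sdiff Metric.isClosed_closedBall
    have hfr : ∀ z ∈ frontier U, ‖z‖ = δ ∨ ‖z‖ = R := by
      intro z hz
      rw [hUo.frontier_eq] at hz
      obtain ⟨h1, h2⟩ := hUcl hz.1
      by_contra! hcon
      apply hz.2
      refine ⟨?_, ?_⟩
      · simpa using lt_of_le_of_ne h2 hcon.2
      · simpa using lt_of_le_of_ne h1 hcon.1.symm
    have hne : ∀ z ∈ closure U, z ≠ 0 := by
      rintro z hz rfl
      have := (hUcl hz).1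
      simp at this
      linarith
    have hF : DiffContOnCl ℂ (fun z : ℂ => z⁻¹ • (z • b + y) ^ N) U := by
      refine ⟨?_, ?_⟩
      · intro z hz
        exact ((differentiableAt_inv (hne z (subset_closure hz))).smul
          ((hpd z).pow N)).differentiableWithinAt
      · intro z hz
        exact ((continuousAt_inv₀ (hne z hz)).smul
          ((hpcont.pow N).continuousAt)).continuousWithinAt
    have hmax := sb_max _ U (Metric.isBounded_ball.subset Set.sdiff_subset) hF D hDpos.le ?_ 1 ?_
      (w ^ N) ?_
    · simpa using hmax
    · intro z hz v hv
      have hz0 := hne z (frontier_subset_closure hz)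
      obtain ⟨v, hv', rfl⟩ := (sb_smul_pow _ _ (inv_ne_zero hz0) N hN v).1 hv
      rw [norm_mul, norm_inv, norm_pow]
      rcases hfr z hz with h | h
      · rw [h, hD]
        have : ‖v‖ ≤ c := sb_of_pow _ c hc.le n hn
          (hball (by rw [dist_zero_right, h]; exact hδε)).le v hv'
        gcongr
      · rw [h]
        have h1 : ‖v‖ ≤ |K| := (hK z v hv').trans (le_abs_self K)
        have h2 : ‖v‖ ^ N ≤ |K| ^ N := by gcongr
        rw [div_le_iff₀ hDpos] at hRK
        rw [inv_mul_le_iff₀ (by linarith)]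
        exact h2.trans hRK
    · constructor
      · simp; linarith
      · simpa using hδ1
    · exact (sb_smul_pow _ _ (by simp) N hN _).2 ⟨w, by simpa using hw, by simp⟩
  by_contra! hcw
  have h1 : 1 < ‖w‖ / c := (one_lt_div hc).2 hcw
  obtain ⟨N, hN⟩ := pow_unbounded_of_one_lt δ⁻¹ h1
  have h2 := main (N + 1) N.succ_pos
  have h3 : (‖w‖ / c) ^ (N + 1) ≤ δ⁻¹ := by
    rw [div_pow, div_le_iff₀ (by positivity)]; exact h2
  have h4 : (‖w‖ / c) ^ N ≤ (‖w‖ / c) ^ (N + 1) := pow_le_pow_right₀ h1.le (by omega)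
  linarith

theorem sb_conj (b : C) (hb : ∀ y : C, ∃ K : ℝ, ∀ z : ℂ, ∀ w ∈ spectrum ℂ (z • b + y), ‖w‖ ≤ K) :
    (∀ w ∈ spectrum ℂ b, w = 0) ∧
      ∀ u : Cˣ, ∀ w ∈ spectrum ℂ ((u : C) * b * ((u⁻¹ : Cˣ) : C) - b), w = 0 := by
  have h0 : ∀ w ∈ spectrum ℂ b, w = 0 := by
    intro w hw
    obtain ⟨K, hK⟩ := hb 0
    rw [← norm_le_zero_iff]
    refine le_of_forall_gt_imp_ge_of_dense fun c hc => ?_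
    refine sb_liouville b 0 K hK c hc ?_ w (by simpa using hw)
    intro v hv
    have : Nontrivial C := NormOneClass.nontrivial
    rw [spectrum.zero_eq] at hv
    rw [Set.mem_singleton_iff.1 hv]
    simpa using hc
  refine ⟨h0, fun u w hw => ?_⟩
  obtain ⟨K, hK⟩ := hb ((u : C) * b * ((u⁻¹ : Cˣ) : C))
  rw [← norm_le_zero_iff]
  refine le_of_forall_gt_imp_ge_of_dense fun c hc => ?_
  refine sb_liouville (-b) ((u : C) * b * ((u⁻¹ : Cˣ) : C)) K ?_ c hc ?_ w ?_
  · intro z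
    have := hK (-z)
    simpa using this
  · intro v hv
    rw [spectrum.units_conjugate] at hv
    rw [h0 v hv]
    simpa using hc
  · rwa [neg_add_eq_sub]

theorem sb_inv {C : Type*} [Ring C] (L : Ideal C) [hL : L.IsMaximal] (d : C) (hd : d ∉ L) : ∃ c, c * d - 1 ∈ L := by
  have h : Ideal.span {d} ⊔ L = ⊤ := by
    refine hL.1.2 _ (lt_of_le_of_ne le_sup_right fun h => hd ?_)
    rw [h]
    exact Ideal.mem_sup_left (Ideal.mem_span_singleton_self d)
  have h1 : (1 : C) ∈ Ideal.span {d} ⊔ L := h ▸ Submodule.mem_top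
  obtain ⟨c, l, hl, h⟩ := Ideal.mem_span_singleton_sup.1 h1
  refine ⟨c, ?_⟩
  rw [← h]
  simpa using hl

/-- Schur's lemma for the maximal left ideal `L`. -/
theorem sb_schur (L : Ideal C) [hL : L.IsMaximal] (b : C) (hb : ∀ l ∈ L, l * b ∈ L) :
    ∃ k : ℂ, b - algebraMap ℂ C k ∈ L := by
  by_contra! hcon
  let S : Submodule ℂ C := L.restrictScalars ℂ
  have hScl : IsClosed (S : Set C) := Ideal.IsMaximal.isClosed (I := L)
  have hmem : ∀ x, x ∈ S ↔ x ∈ L := fun x => Iff.rfl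
  let X := C ⧸ S
  have hmap : ∀ d : C, (∀ l ∈ L, l * d ∈ L) → S ≤ S.comap (LinearMap.mulRight ℂ d) :=
    fun d hd l hl => hd l hl
  let D₀ : X →ₗ[ℂ] X := S.mapQ S (LinearMap.mulRight ℂ b) (hmap b hb)
  have hD₀ : ∀ x : C, D₀ (S.mkQ x) = S.mkQ (x * b) := fun x => rfl
  have hcont : Continuous D₀ := by
    have hq : Topology.IsQuotientMap (S.mkQ : C → X) := S.isOpenQuotientMap_mkQ.isQuotientMap
    rw [hq.continuous_iff]
    exact hq.continuous.comp (continuous_mul_const b)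
  let D : X →L[ℂ] X := ⟨D₀, hcont⟩
  have hD : ∀ x : C, D (S.mkQ x) = S.mkQ (x * b) := fun x => rfl
  have hXn : Nontrivial X := by
    rw [Submodule.Quotient.nontrivial_iff]
    intro h
    apply hL.ne_top
    rw [Ideal.eq_top_iff_one, ← hmem, h]
    trivial
  obtain ⟨k, hk⟩ := spectrum.nonempty (A := X →L[ℂ] X) D
  apply hk
  set d := b - algebraMap ℂ C k with hd
  have hdL : ∀ l ∈ L, l * d ∈ L := by
    intro l hl
    rw [hd, mul_sub, ← Algebra.commutes]
    exact L.sub_mem (hb l hl) (L.mul_mem_left _ hl)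
  have hdn : d ∉ L := hcon k
  have hE : ∀ x : C, (algebraMap ℂ (X →L[ℂ] X) k - D) (S.mkQ x) = - S.mkQ (x * d) := by
    intro x
    rw [sub_apply, hD, ContinuousLinearMap.algebraMap_apply, ← map_smul,
      ← map_sub, ← map_neg, hd, mul_sub, ← Algebra.commutes, Algebra.smul_def, neg_sub]
  obtain ⟨c, hc⟩ : ∃ c, c * d - 1 ∈ L := by
    exact sb_inv L d hdn
  have hinj : ∀ x, x * d ∈ L → x ∈ L := by
    let L' : Ideal C := Submodule.comap (LinearMap.toSpanSingleton C C d) L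
    have hL' : ∀ x, x ∈ L' ↔ x * d ∈ L := fun x => Iff.rfl
    have hne : L' ≠ ⊤ := by
      rw [Ideal.ne_top_iff_one, hL', one_mul]
      exact hdn
    have heq := hL.eq_of_le hne (fun l hl => (hL' l).2 (hdL l hl))
    intro x hx
    rw [heq]
    exact (hL' x).2 hx
  have hbij : Function.Bijective (algebraMap ℂ (X →L[ℂ] X) k - D) := by
    constructor
    · rw [injective_iff_map_eq_zero]
      intro x hx
      obtain ⟨x, rfl⟩ := S.mkQ_surjective x
      rw [hE, neg_eq_zero, Submodule.mkQ_apply, Submodule.Quotient.mk_eq_zero, hmem] at hx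
      rw [Submodule.mkQ_apply, Submodule.Quotient.mk_eq_zero, hmem]
      exact hinj x hx
    · intro x
      obtain ⟨x, rfl⟩ := S.mkQ_surjective x
      refine ⟨S.mkQ (-(x * c)), ?_⟩
      rw [hE, ← map_neg, ← sub_eq_zero, ← map_sub, Submodule.mkQ_apply,
        Submodule.Quotient.mk_eq_zero, hmem]
      have := L.mul_mem_left x hc
      convert this using 1
      noncomm_ring
  exact ContinuousLinearMap.isUnit_iff_bijective.2 hbij

theorem sb_mem_maximal (b : C)
    (hb : ∀ y : C, ∃ K : ℝ, ∀ z : ℂ, ∀ w ∈ spectrum ℂ (z • b + y), ‖w‖ ≤ K)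
    (L : Ideal C) [hL : L.IsMaximal] : b ∈ L := by
  obtain ⟨h0, h1⟩ := sb_conj b hb
  have hnu : ∀ x ∈ L, ¬ IsUnit x := fun x hx hu => hL.ne_top (L.eq_top_of_isUnit_mem hx hu)
  have hspec : ∀ (x : C) (k : ℂ), x - algebraMap ℂ C k ∈ L → k ∈ spectrum ℂ x := by
    intro x k hx hu
    apply hnu _ hx
    rw [← neg_sub]
    exact hu.neg
  by_cases hs : ∀ l ∈ L, l * b ∈ L
  · obtain ⟨k, hk⟩ := sb_schur L b hs
    have := h0 k (hspec b k hk)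
    simpa [this] using hk
  · exfalso
    push Not at hs
    obtain ⟨l, hl, hlb⟩ := hs
    obtain ⟨c, hc⟩ : ∃ c, c * (l * b) - 1 ∈ L := sb_inv L _ hlb
    set x := c * l with hx
    have hxL : x ∈ L := L.mul_mem_left _ hl
    have hev : ∀ᶠ t : ℂ in 𝓝 0, IsUnit (1 + t • x) := by
      have hcont : Continuous fun t : ℂ => 1 + t • x := by fun_prop
      have := hcont.continuousAt.preimage_mem_nhds (x := (0:ℂ))
        (Units.isOpen.mem_nhds (x := 1 + (0:ℂ) • x) (by simp))
      exact this
    have hev' : ∀ᶠ t : ℂ in 𝓝[≠] 0, IsUnit (1 + t • x) ∧ t ≠ 0 :=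
      (hev.filter_mono nhdsWithin_le_nhds).and self_mem_nhdsWithin
    obtain ⟨t, ⟨u, hu⟩, ht⟩ := hev'.exists
    apply ht
    apply h1 u
    apply hspec
    have htx : t • x ∈ L := by rw [Algebra.smul_def]; exact L.mul_mem_left _ hxL
    have hui : ((u⁻¹ : Cˣ) : C) - 1 ∈ L := by
      have : ((u⁻¹ : Cˣ) : C) - 1 = - (((u⁻¹ : Cˣ) : C) * (t • x)) := by
        have h2 : t • x = u - 1 := by rw [hu]; simp
        rw [h2, mul_sub, Units.inv_mul]; simp
      rw [this]
      exact L.neg_mem (L.mul_mem_left _ htx)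
    have key : (u : C) * b * ((u⁻¹ : Cˣ) : C) - b - algebraMap ℂ C t =
        (u * b) * (((u⁻¹ : Cˣ) : C) - 1) + algebraMap ℂ C t * (c * (l * b) - 1) := by
      have h2 : (u : C) * b = b + algebraMap ℂ C t * (c * (l * b)) := by
        rw [hu, hx, Algebra.smul_def]; noncomm_ring
      rw [mul_sub, mul_one, mul_sub, mul_one]
      nth_rewrite 3 [h2]
      abel
    rw [key]
    exact L.add_mem (L.mul_mem_left _ hui) (L.mul_mem_left _ hc)
end SB

section Quot
variable {B : Type*} [NormedRing B] [NormedAlgebra ℂ B]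

theorem sb_mk_eq_zero (J : TwoSidedIdeal B) (x : B) : J.ringCon.mk' x = 0 ↔ x ∈ J := by
  rw [← TwoSidedIdeal.mem_ker, TwoSidedIdeal.ker_ringCon_mk']

theorem sb_mk_surj (J : TwoSidedIdeal B) : Function.Surjective J.ringCon.mk' := Quotient.mk_surjective

noncomputable def sbHom (J : TwoSidedIdeal B) : (B ⧸ J.asIdeal) →+ J.ringCon.Quotient :=
  QuotientAddGroup.lift J.asIdeal.toAddSubgroup (J.ringCon.mk' : B →+ J.ringCon.Quotient)
    (fun x hx => (sb_mk_eq_zero J x).2 (by simpa using hx))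

theorem sbHom_mk (J : TwoSidedIdeal B) (x : B) :
    sbHom J (Submodule.Quotient.mk x) = J.ringCon.mk' x := rfl

theorem sbHom_bij (J : TwoSidedIdeal B) : Function.Bijective (sbHom J) := by
  constructor
  · rw [injective_iff_map_eq_zero]
    intro x hx
    obtain ⟨x, rfl⟩ := Submodule.Quotient.mk_surjective _ x
    rw [sbHom_mk, sb_mk_eq_zero] at hx
    rw [Submodule.Quotient.mk_eq_zero]
    simpa using hx
  · intro q
    obtain ⟨x, rfl⟩ := sb_mk_surj J q
    exact ⟨_, sbHom_mk J x⟩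

noncomputable def sbEquiv (J : TwoSidedIdeal B) : J.ringCon.Quotient ≃+ (B ⧸ J.asIdeal) :=
  (AddEquiv.ofBijective (sbHom J) (sbHom_bij J)).symm

theorem sbEquiv_mk (J : TwoSidedIdeal B) (x : B) :
    sbEquiv J (J.ringCon.mk' x) = Submodule.Quotient.mk x := by
  rw [sbEquiv, AddEquiv.symm_apply_eq]
  rfl

noncomputable abbrev sbGroup (J : TwoSidedIdeal B) [IsClosed (J.asIdeal : Set B)] :
    NormedAddCommGroup J.ringCon.Quotient :=
  NormedAddCommGroup.induced J.ringCon.Quotient (B ⧸ J.asIdeal) (sbEquiv J) (sbEquiv J).injective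

theorem sb_norm_mk_le (J : TwoSidedIdeal B) [IsClosed (J.asIdeal : Set B)] (x : B) :
    (sbGroup J).norm (J.ringCon.mk' x) ≤ ‖x‖ := by
  change ‖sbEquiv J (J.ringCon.mk' x)‖ ≤ _
  rw [sbEquiv_mk]
  exact Submodule.Quotient.norm_mk_le _ _

theorem sb_norm_lt (J : TwoSidedIdeal B) [IsClosed (J.asIdeal : Set B)] (q : J.ringCon.Quotient)
    (ε : ℝ) (hε : 0 < ε) : ∃ x : B, J.ringCon.mk' x = q ∧ ‖x‖ < (sbGroup J).norm q + ε := by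
  obtain ⟨x, hx, hlt⟩ := Submodule.Quotient.norm_mk_lt (sbEquiv J q) hε
  refine ⟨x, ?_, hlt⟩
  apply (sbEquiv J).injective
  rw [sbEquiv_mk, hx]

theorem sb_norm_mul_le (J : TwoSidedIdeal B) [IsClosed (J.asIdeal : Set B)]
    (p q : J.ringCon.Quotient) :
    (sbGroup J).norm (p * q) ≤ (sbGroup J).norm p * (sbGroup J).norm q := by
  have h : ∀ ε : ℝ, 0 < ε → (sbGroup J).norm (p * q) ≤
      ((sbGroup J).norm p + ε) * ((sbGroup J).norm q + ε) := by
    intro ε hε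
    obtain ⟨x, rfl, hx⟩ := sb_norm_lt J p ε hε
    obtain ⟨y, rfl, hy⟩ := sb_norm_lt J q ε hε
    rw [← map_mul]
    refine (sb_norm_mk_le J _).trans ((norm_mul_le x y).trans ?_)
    exact mul_le_mul hx.le hy.le (norm_nonneg _) ((norm_nonneg _).trans hx.le)
  have ht : Tendsto (fun ε : ℝ => ((sbGroup J).norm p + ε) * ((sbGroup J).norm q + ε)) (𝓝[>] 0)
      (𝓝 (((sbGroup J).norm p + 0) * ((sbGroup J).norm q + 0))) := by
    refine Tendsto.mono_left (Continuous.tendsto ?_ 0) nhdsWithin_le_nhds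
    fun_prop
  rw [add_zero, add_zero] at ht
  exact ge_of_tendsto ht (eventually_nhdsWithin_of_forall fun ε hε => h ε hε)

noncomputable abbrev sbRing (J : TwoSidedIdeal B) [IsClosed (J.asIdeal : Set B)] :
    NormedRing J.ringCon.Quotient :=
  { sbGroup J, (inferInstance : Ring J.ringCon.Quotient) with
    norm_mul_le := sb_norm_mul_le J }

theorem sb_smul_mk (J : TwoSidedIdeal B) (c : ℂ) (x : B) :
    algebraMap ℂ J.ringCon.Quotient c * J.ringCon.mk' x = J.ringCon.mk' (c • x) := by
  rw [Algebra.smul_def, map_mul]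
  rfl

noncomputable abbrev sbAlgebra (J : TwoSidedIdeal B) [IsClosed (J.asIdeal : Set B)] :
    letI := sbRing J
    NormedAlgebra ℂ J.ringCon.Quotient :=
  letI := sbRing J
  { TwoSidedIdeal.quotientAlgebra J with
    norm_smul_le := by
      intro c q
      have h1 : ‖algebraMap ℂ J.ringCon.Quotient c * q‖ = ‖c • sbEquiv J q‖ := by
        obtain ⟨x, rfl⟩ := sb_mk_surj J q
        change ‖sbEquiv J (algebraMap ℂ J.ringCon.Quotient c * J.ringCon.mk' x)‖ = _
        rw [sb_smul_mk, sbEquiv_mk, sbEquiv_mk]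
        rfl
      exact h1.le.trans (norm_smul_le c (sbEquiv J q)) }

theorem sb_complete (J : TwoSidedIdeal B) [IsClosed (J.asIdeal : Set B)] [CompleteSpace B] :
    letI := sbRing J
    CompleteSpace J.ringCon.Quotient := by
  letI := sbRing J
  have hi : Isometry (sbEquiv J) := Isometry.of_dist_eq fun _ _ => rfl
  let e : J.ringCon.Quotient ≃ᵢ (B ⧸ J.asIdeal) := ⟨(sbEquiv J).toEquiv, hi⟩
  exact e.completeSpace

theorem sb_normOne (J : TwoSidedIdeal B) [IsClosed (J.asIdeal : Set B)] [NormOneClass B]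
    (hJ : J ≠ ⊤) :
    letI := sbRing J
    NormOneClass J.ringCon.Quotient := by
  letI := sbRing J
  constructor
  have h1 : ‖(1 : J.ringCon.Quotient)‖ ≤ 1 := by
    have := sb_norm_mk_le J 1
    rw [map_one, norm_one (α := B)] at this
    exact this
  have h0 : (1 : J.ringCon.Quotient) ≠ 0 := by
    rw [← map_one J.ringCon.mk', Ne, sb_mk_eq_zero]
    intro h
    exact hJ (TwoSidedIdeal.one_mem_iff J |>.1 h)
  have h2 : 0 < ‖(1 : J.ringCon.Quotient)‖ := norm_pos_iff.2 h0
  have h3 := norm_mul_le (1 : J.ringCon.Quotient) 1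
  rw [mul_one] at h3
  nlinarith

theorem sb_main (J : TwoSidedIdeal B) (hcl : IsClosed (J : Set B)) [CompleteSpace B]
    [NormOneClass B] (hJ : J ≠ ⊤) (b : J.ringCon.Quotient)
    (hb : ∀ y : J.ringCon.Quotient, ∃ K : ℝ, ∀ z : ℂ, ∀ w ∈ spectrum ℂ
      (algebraMap ℂ J.ringCon.Quotient z * b + y), ‖w‖ ≤ K) :
    b ∈ (⊥ : TwoSidedIdeal J.ringCon.Quotient).jacobson := by
  have hcl' : IsClosed (J.asIdeal : Set B) := by
    convert hcl using 1
    ext x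
    simp
  rw [← TwoSidedIdeal.mem_asIdeal, TwoSidedIdeal.asIdeal_jacobson, Ideal.jacobson, Ideal.mem_sInf]
  rintro L ⟨-, hL⟩
  letI := sbRing J
  letI := sbAlgebra J
  haveI := sb_complete J
  haveI := sb_normOne J hJ
  refine sb_mem_maximal b ?_ L
  intro y
  obtain ⟨K, hK⟩ := hb y
  refine ⟨K, fun z w hw => hK z w ?_⟩
  rw [Algebra.smul_def] at hw
  exact hw
end Quot

/-- If `T` is essentially spectrally bounded and surjective modulo `J`, then for `x ∈ I`
the coset `Tx + J` lies in the Jacobson radical of `B/J`; in particular if `B/J` is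
semisimple then `T I ⊆ J`. -/
theorem essentially_spectrally_bounded_maps_ideal_into_radical
    {A B : Type*}
    [NormedRing A] [NormedAlgebra ℂ A] [CompleteSpace A] [NormOneClass A]
    [NormedRing B] [NormedAlgebra ℂ B] [CompleteSpace B] [NormOneClass B]
    (hBsemisimple : (⊥ : TwoSidedIdeal B).jacobson = ⊥)
    (I : TwoSidedIdeal A) (J : TwoSidedIdeal B)
    (hIclosed : IsClosed (I : Set A)) (hJclosed : IsClosed (J : Set B))
    (hIproper : I ≠ ⊤) (hJproper : J ≠ ⊤)
    (T : A →ₗ[ℂ] B) (M : ℝ≥0)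
    (hessbdd : ∀ x : A,
      spectralRadius ℂ (J.ringCon.mk' (T x)) ≤ (M : ℝ≥0∞) * spectralRadius ℂ (I.ringCon.mk' x))
    (hsurjmod : ∀ y : B, ∃ x : A, y - T x ∈ J) :
    (∀ x ∈ I, J.ringCon.mk' (T x) ∈ (⊥ : TwoSidedIdeal J.ringCon.Quotient).jacobson) ∧
    ((⊥ : TwoSidedIdeal J.ringCon.Quotient).jacobson = ⊥ → ∀ x ∈ I, T x ∈ J) := by
  have h1 : ∀ x ∈ I, J.ringCon.mk' (T x) ∈ (⊥ : TwoSidedIdeal J.ringCon.Quotient).jacobson := by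
    intro x hx
    refine sb_main J hJclosed hJproper _ fun y => ?_
    obtain ⟨y, rfl⟩ := sb_mk_surj J y
    obtain ⟨a, ha⟩ := hsurjmod y
    have hy : J.ringCon.mk' y = J.ringCon.mk' (T a) := by
      rw [← sub_eq_zero, ← map_sub, sb_mk_eq_zero]
      exact ha
    have hfin : (M : ℝ≥0∞) * spectralRadius ℂ (I.ringCon.mk' a) < ⊤ := by
      refine ENNReal.mul_lt_top ENNReal.coe_lt_top ?_
      refine lt_of_le_of_lt ?_ (ENNReal.coe_lt_top (r := ‖a‖₊))
      refine le_trans ?_ (spectrum.spectralRadius_le_nnnorm (𝕜 := ℂ) a)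
      let f : A →ₐ[ℂ] I.ringCon.Quotient := { I.ringCon.mk' with commutes' := fun _ => rfl }
      exact biSup_mono fun k hk => AlgHom.spectrum_apply_subset f a hk
    refine ⟨((M : ℝ≥0∞) * spectralRadius ℂ (I.ringCon.mk' a)).toReal, fun z w hw => ?_⟩
    have hx0 : I.ringCon.mk' (z • x + a) = I.ringCon.mk' a := by
      rw [map_add, ← sb_smul_mk, (sb_mk_eq_zero I x).2 hx, mul_zero, zero_add]
    have hTx : J.ringCon.mk' (T (z • x + a)) =
        algebraMap ℂ J.ringCon.Quotient z * J.ringCon.mk' (T x) + J.ringCon.mk' y := by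
      rw [map_add, map_add, map_smul, ← sb_smul_mk, hy]
    have h := hessbdd (z • x + a)
    rw [hx0, hTx] at h
    have h2 : (‖w‖₊ : ℝ≥0∞) ≤ (M : ℝ≥0∞) * spectralRadius ℂ (I.ringCon.mk' a) :=
      le_trans (le_iSup₂ (f := fun (k : ℂ) (_ : k ∈ spectrum ℂ
        (algebraMap ℂ J.ringCon.Quotient z * J.ringCon.mk' (T x) + J.ringCon.mk' y)) => (‖k‖₊ : ℝ≥0∞)) w hw) h
    have h3 := ENNReal.toReal_mono hfin.ne h2
    simpa using h3
  refine ⟨h1, fun hss x hx => ?_⟩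
  have h2 := h1 x hx
  rw [hss, TwoSidedIdeal.mem_bot, sb_mk_eq_zero] at h2
  exact h2
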